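/- Let N ≥ 2 be a natural number and let G : ℂ² → ℂ be a continuous function satisfying G(φ_k(z)) = G(z) for every z ∈ ℂ² and every k ∈ {1, …, N}. Then there exists a continuous function f : X_N → ℂ (where X_N ⊂ ℂ³ carries the subspace topology) such that f(π_N(z)) = G(z) for all z ∈ ℂ². -/

import Mathlib

open Complex

noncomputable section

/-- The point `(a, b)` of `ℂ²` with the Euclidean (Hermitian) norm. -/
def mk2 (a b : ℂ) : EuclideanSpace ℂ (Fin 2) :=
  (WithLp.equiv 2 (Fin 2 → ℂ)).symm ![a, b]

/-- The point `(a, b, c)` of `ℂ³` with the Euclidean (Hermitian) norm. -/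
def mk3 (a b c : ℂ) : EuclideanSpace ℂ (Fin 3) :=
  (WithLp.equiv 2 (Fin 3 → ℂ)).symm ![a, b, c]

/-- `π_N(z₁, z₂) = (z₁^N, z₂^N, z₁z₂)`. -/
def piN (N : ℕ) (z : EuclideanSpace ℂ (Fin 2)) : EuclideanSpace ℂ (Fin 3) :=
  mk3 (z 0 ^ N) (z 1 ^ N) (z 0 * z 1)

/-- `ρ_N = e^{2πi/N}`. -/
def rhoN (N : ℕ) : ℂ := Complex.exp (2 * Real.pi * Complex.I / N)

/-- `φ_k(z₁, z₂) = (ρ_N^k z₁, ρ_N^{−k} z₂)`. -/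
def phiN (N k : ℕ) (z : EuclideanSpace ℂ (Fin 2)) : EuclideanSpace ℂ (Fin 2) :=
  mk2 (rhoN N ^ k * z 0) (rhoN N ^ (-(k : ℤ)) * z 1)

/-- `X_N = {x ∈ ℂ³ : x₁x₂ = x₃^N}`, with the subspace topology. -/
def XN (N : ℕ) : Set (EuclideanSpace ℂ (Fin 3)) := {x | x 0 * x 1 = x 2 ^ N}

/-!
The map `π_N` is proper, because already its first two coordinates `(z₁^N, z₂^N)` form a proper map
of `ℂ²` to itself. Its image is `X_N`, so `ℂ² → X_N` is a closed continuous surjection and hence a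
quotient map, and continuous functions on `X_N` are the continuous functions on `ℂ²` which are
constant on the fibres of `π_N`. If `π_N(z) = π_N(w)` and `z₁ ≠ 0`, then `w₁ = ρ_N^k z₁` for some
`k`, and `z₁z₂ = w₁w₂` forces `z₂ = ρ_N^k w₂`; if `z₁ = 0`, then `w₁ = 0` and `k` is read off the
second coordinates instead. So the fibres lie in orbits of the maps `φ_k`.
-/

open Set Topology

section RootsOfUnity

variable {R : Type*} [CommRing R] [IsDomain R] {ζ a b c d : R} {n : ℕ}

theorem exists_pow_mul_eq_of_pow_eq_pow (hζ : IsPrimitiveRoot ζ n) (hn : n ≠ 0)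
    (h : a ^ n = c ^ n) : ∃ k, 1 ≤ k ∧ k ≤ n ∧ ζ ^ k * a = c := by
  have hc : c ∈ Polynomial.nthRoots n (a ^ n) :=
    (Polynomial.mem_nthRoots (Nat.pos_of_ne_zero hn)).2 h.symm
  rw [hζ.nthRoots_eq rfl, Multiset.mem_map] at hc
  obtain ⟨k, hk, rfl⟩ := hc
  rcases Nat.eq_zero_or_pos k with rfl | hk_pos
  · exact ⟨n, Nat.one_le_iff_ne_zero.2 hn, le_rfl, by rw [hζ.pow_eq_one, pow_zero]⟩
  · exact ⟨k, hk_pos, (Multiset.mem_range.1 hk).le, rfl⟩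

theorem exists_pow_mul_eq_and_pow_mul_eq (hζ : IsPrimitiveRoot ζ n) (hn : n ≠ 0)
    (hac : a ^ n = c ^ n) (hbd : b ^ n = d ^ n) (h : a * b = c * d) :
    ∃ k, 1 ≤ k ∧ k ≤ n ∧ ζ ^ k * a = c ∧ ζ ^ k * d = b := by
  rcases eq_or_ne a 0 with rfl | ha
  · have hc : c = 0 := eq_zero_of_pow_eq_zero (hac.symm.trans (zero_pow hn))
    obtain ⟨k, hk_pos, hk_le, hk⟩ := exists_pow_mul_eq_of_pow_eq_pow hζ hn hbd.symm
    exact ⟨k, hk_pos, hk_le, by rw [mul_zero, hc], hk⟩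
  · obtain ⟨k, hk_pos, hk_le, rfl⟩ := exists_pow_mul_eq_of_pow_eq_pow hζ hn hac
    exact ⟨k, hk_pos, hk_le, rfl, mul_left_cancel₀ ha (by rw [h]; ring)⟩

end RootsOfUnity

theorem exists_pow_eq_and_pow_eq_and_mul_eq {K : Type*} [Field K] [IsAlgClosed K]
    {n : ℕ} {x y t : K} (hn : n ≠ 0) (h : x * y = t ^ n) :
    ∃ a b : K, a ^ n = x ∧ b ^ n = y ∧ a * b = t := by
  obtain ⟨a, rfl⟩ := IsAlgClosed.exists_pow_nat_eq x (Nat.pos_of_ne_zero hn)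
  rcases eq_or_ne a 0 with rfl | ha
  · obtain ⟨b, rfl⟩ := IsAlgClosed.exists_pow_nat_eq y (Nat.pos_of_ne_zero hn)
    have ht : t = 0 := eq_zero_of_pow_eq_zero (by rw [← h, zero_pow hn, zero_mul])
    exact ⟨0, b, rfl, rfl, by rw [ht, zero_mul]⟩
  · refine ⟨a, t / a, rfl, ?_, mul_div_cancel₀ t ha⟩
    rw [div_pow, ← h, mul_div_cancel_left₀ y (pow_ne_zero n ha)]

theorem isProperMap_pow {R : Type*} [NormedRing R] [IsAbsoluteValue (norm : R → ℝ)] [Nontrivial R]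
    [ProperSpace R] {n : ℕ} (hn : n ≠ 0) : IsProperMap fun x : R ↦ x ^ n := by
  have hdeg : 0 < (Polynomial.X ^ n : Polynomial R).degree := by
    rw [Polynomial.degree_X_pow]
    exact_mod_cast Nat.pos_of_ne_zero hn
  simpa only [Polynomial.eval_X_pow] using Polynomial.isProperMap_eval _ hdeg

section Quotient

variable {N k : ℕ} {z w : EuclideanSpace ℂ (Fin 2)} {x : EuclideanSpace ℂ (Fin 3)}

theorem piN_eq_iff : piN N z = x ↔ z 0 ^ N = x 0 ∧ z 1 ^ N = x 1 ∧ z 0 * z 1 = x 2 := by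
  simp [PiLp.ext_iff, Fin.forall_fin_succ, piN, mk3]

theorem phiN_eq_iff : phiN N k z = w ↔ rhoN N ^ k * z 0 = w 0 ∧ rhoN N ^ k * w 1 = z 1 := by
  have hρ : rhoN N ^ k ≠ 0 := pow_ne_zero k (Complex.exp_ne_zero _)
  simp [PiLp.ext_iff, Fin.forall_fin_succ, phiN, mk2, inv_mul_eq_iff_eq_mul₀ hρ, eq_comm]

theorem isPrimitiveRoot_rhoN (hN : N ≠ 0) : IsPrimitiveRoot (rhoN N) N :=
  Complex.isPrimitiveRoot_exp N hN

theorem exists_phiN_eq_of_piN_eq_piN (hN : N ≠ 0) (h : piN N z = piN N w) :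
    ∃ k, 1 ≤ k ∧ k ≤ N ∧ phiN N k z = w := by
  obtain ⟨h₀, h₁, h₂⟩ := piN_eq_iff.1 h
  obtain ⟨k, hk_pos, hk_le, hk⟩ :=
    exists_pow_mul_eq_and_pow_mul_eq (isPrimitiveRoot_rhoN hN) hN h₀ h₁ h₂
  exact ⟨k, hk_pos, hk_le, phiN_eq_iff.2 hk⟩

theorem piN_mem_XN (N : ℕ) (z : EuclideanSpace ℂ (Fin 2)) : piN N z ∈ XN N :=
  (mul_pow (z 0) (z 1) N).symm

theorem exists_piN_eq_of_mem_XN (hN : N ≠ 0) (hx : x ∈ XN N) : ∃ z, piN N z = x := by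
  obtain ⟨a, b, h⟩ := exists_pow_eq_and_pow_eq_and_mul_eq hN hx
  exact ⟨mk2 a b, piN_eq_iff.2 h⟩

theorem continuous_piN (N : ℕ) : Continuous (piN N) := by
  refine (PiLp.continuous_toLp 2 _).comp (continuous_pi fun i ↦ ?_)
  fin_cases i <;> fun_prop

theorem isProperMap_piN (hN : N ≠ 0) : IsProperMap (piN N) := by
  let firstTwo (x : EuclideanSpace ℂ (Fin 3)) : Fin 2 → ℂ := fun i ↦ x i.castSucc
  have hcomp : firstTwo ∘ piN N = (fun v i ↦ v i ^ N) ∘ PiLp.homeomorph 2 (fun _ ↦ ℂ) := by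
    ext z i
    fin_cases i <;> rfl
  refine isProperMap_of_comp_of_t2 (g := firstTwo) (continuous_piN N) (by fun_prop) ?_
  rw [hcomp]
  exact (IsProperMap.pi_map fun _ ↦ isProperMap_pow hN).comp (Homeomorph.isProperMap _)

/-- The continuous map `ℂ² → X_N` induced by `π_N`. -/
def piNToXN (N : ℕ) : C(EuclideanSpace ℂ (Fin 2), XN N) :=
  ⟨codRestrict (piN N) (XN N) (piN_mem_XN N), (continuous_piN N).codRestrict _⟩

theorem isQuotientMap_piNToXN (hN : N ≠ 0) : IsQuotientMap (piNToXN N) := by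
  refine ((isProperMap_piN hN).isClosedMap.codRestrict (piN_mem_XN N)).isQuotientMap
    (piNToXN N).continuous fun ⟨x, hx⟩ ↦ ?_
  obtain ⟨z, rfl⟩ := exists_piN_eq_of_mem_XN hN hx
  exact ⟨z, rfl⟩

theorem factorsThrough_piNToXN {Y : Type*} {G : EuclideanSpace ℂ (Fin 2) → Y} (hN : N ≠ 0)
    (hG : ∀ z, ∀ k : ℕ, 1 ≤ k → k ≤ N → G (phiN N k z) = G z) :
    Function.FactorsThrough G (piNToXN N) := by
  intro z w hzw
  obtain ⟨k, hk_pos, hk_le, rfl⟩ := exists_phiN_eq_of_piN_eq_piN hN (congrArg Subtype.val hzw)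
  exact (hG z k hk_pos hk_le).symm

end Quotient

theorem stmt11_general {Y : Type*} [TopologicalSpace Y] {N : ℕ} (hN : N ≠ 0)
    {G : EuclideanSpace ℂ (Fin 2) → Y} (hGc : Continuous G)
    (hGi : ∀ z : EuclideanSpace ℂ (Fin 2), ∀ k : ℕ, 1 ≤ k → k ≤ N → G (phiN N k z) = G z) :
    ∃ f : XN N → Y, Continuous f ∧
      ∀ z : EuclideanSpace ℂ (Fin 2), ∀ hz : piN N z ∈ XN N, f ⟨piN N z, hz⟩ = G z := by
  have hq : IsQuotientMap (piNToXN N) := isQuotientMap_piNToXN hN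
  have hG : Function.FactorsThrough G (piNToXN N) := factorsThrough_piNToXN hN hGi
  let f : C(XN N, Y) := hq.lift ⟨G, hGc⟩ hG
  have hf : f.comp (piNToXN N) = ⟨G, hGc⟩ := hq.lift_comp ⟨G, hGc⟩ hG
  exact ⟨f, f.continuous, fun z _ ↦ DFunLike.congr_fun hf z⟩

/-- A continuous `G : ℂ² → ℂ` invariant under all `φ_k`, `k = 1, …, N`, descends to a
continuous function `f` on `X_N` with `f ∘ π_N = G`. -/
theorem stmt11 (N : ℕ) (hN : 2 ≤ N) (G : EuclideanSpace ℂ (Fin 2) → ℂ)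
    (hGc : Continuous G)
    (hGi : ∀ z : EuclideanSpace ℂ (Fin 2), ∀ k : ℕ, 1 ≤ k → k ≤ N → G (phiN N k z) = G z) :
    ∃ f : XN N → ℂ, Continuous f ∧
      ∀ z : EuclideanSpace ℂ (Fin 2), ∀ hz : piN N z ∈ XN N, f ⟨piN N z, hz⟩ = G z := by
  exact stmt11_general (by lia) hGc hGi
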